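/- arXiv:1909.11798 — 4 statements merged into one kernel-verified Lean document; each statement's English description precedes it below -/
import Mathlib

section
/- Let f : ℝⁿ → ℝⁿ be continuously differentiable, let φ : ℝ × ℝⁿ × ℝ → ℝ satisfy a uniform Lipschitz condition |φ(t, y, r₁) − φ(t, y, r₂)| ≤ K·|r₁ − r₂| in its last argument, and let x : [0, T] → ℝⁿ be differentiable with x′(t) = f(x(t)). If ρ₁ and ρ₂ are two continuously differentiable solutions of the Liouville equation ∂ρ/∂t(t, y) + div_y(ρ(t, ·)·f)(y) = φ(t, y, ρ(t, y)) on [0, T] × ℝⁿ with ρ₁(0, x(0)) = ρ₂(0, x(0)), then ρ₁(t, x(t)) = ρ₂(t, x(t)) for all t ∈ [0, T]. -/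
noncomputable section

open Set

/-- Divergence of a vector field on `ℝⁿ`: trace of the total derivative. -/
def diverg {n : ℕ} (w : EuclideanSpace ℝ (Fin n) → EuclideanSpace ℝ (Fin n))
    (y : EuclideanSpace ℝ (Fin n)) : ℝ :=
  LinearMap.trace ℝ (EuclideanSpace ℝ (Fin n)) (fderiv ℝ w y)

lemma diverg_smul_aux {n : ℕ} (f : EuclideanSpace ℝ (Fin n) → EuclideanSpace ℝ (Fin n))
    (y : EuclideanSpace ℝ (Fin n)) (g : EuclideanSpace ℝ (Fin n) → ℝ)
    (hf : DifferentiableAt ℝ f y) (hg : DifferentiableAt ℝ g y) :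
    diverg (fun z => g z • f z) y = g y * diverg f y + fderiv ℝ g y (f y) := by
  unfold diverg
  rw [fderiv_fun_smul hg hf]
  have h : ((g y • fderiv ℝ f y + (fderiv ℝ g y).smulRight (f y) :
      EuclideanSpace ℝ (Fin n) →L[ℝ] EuclideanSpace ℝ (Fin n)) :
      EuclideanSpace ℝ (Fin n) →ₗ[ℝ] EuclideanSpace ℝ (Fin n))
      = g y • (fderiv ℝ f y : EuclideanSpace ℝ (Fin n) →ₗ[ℝ] EuclideanSpace ℝ (Fin n))
        + ((fderiv ℝ g y : EuclideanSpace ℝ (Fin n) →ₗ[ℝ] ℝ)).smulRight (f y) := by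
    ext z; simp
  rw [h, map_add, map_smul, LinearMap.trace_smulRight]
  simp

lemma liouville_deriv_aux {n : ℕ}
    (f : EuclideanSpace ℝ (Fin n) → EuclideanSpace ℝ (Fin n))
    (hf : ContDiff ℝ 1 f) (x : ℝ → EuclideanSpace ℝ (Fin n)) (t c : ℝ)
    (hx : HasDerivAt x (f (x t)) t)
    (ρ : ℝ × EuclideanSpace ℝ (Fin n) → ℝ) (hρ : ContDiff ℝ 1 ρ)
    (hl : deriv (fun s => ρ (s, x t)) t + diverg (fun z => ρ (t, z) • f z) (x t) = c) :
    HasDerivAt (fun s => ρ (s, x s)) (c - ρ (t, x t) * diverg f (x t)) t := by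
  have hd : HasFDerivAt ρ (fderiv ℝ ρ (t, x t)) (t, x t) :=
    (hρ.differentiable one_ne_zero _).hasFDerivAt
  have h1 : HasDerivAt (fun s => ρ (s, x t)) (fderiv ℝ ρ (t, x t) (1, 0)) t :=
    HasFDerivAt.comp_hasDerivAt (f := fun s : ℝ => (s, x t)) t hd
      ((hasDerivAt_id t).prodMk (hasDerivAt_const t (x t)))
  have h2 : HasFDerivAt (fun z => ρ (t, z)) _ (x t) :=
    HasFDerivAt.comp (f := fun z => (t, z)) (x t) hd (hasFDerivAt_prodMk_right t (x t))
  have h3 : HasDerivAt (fun s => ρ (s, x s)) (fderiv ℝ ρ (t, x t) (1, f (x t))) t :=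
    HasFDerivAt.comp_hasDerivAt (f := fun s : ℝ => (s, x s)) t hd
      ((hasDerivAt_id t).prodMk hx)
  rw [h1.deriv, diverg_smul_aux f (x t) (fun z => ρ (t, z))
    (hf.differentiable one_ne_zero _) h2.differentiableAt, h2.fderiv] at hl
  convert h3 using 1
  have h4 : ((1 : ℝ), f (x t)) = (1, 0) + (0, f (x t)) := by simp
  rw [h4, map_add, ← hl]
  simp
  ring

/-- Uniqueness of the value of a Liouville solution along a trajectory of
`ẋ = f(x)`, given the value at the initial point of the trajectory:
if `φ` is uniformly Lipschitz in its last argument, any two `C¹` solutions of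
`∂ρ/∂t + ∇·(ρ f) = φ(t, x, ρ)` agreeing at `(0, x 0)` agree along `x` on `[0, T]`. -/
theorem liouville_uniqueness_along_trajectory {n : ℕ} (T : ℝ) (hT : 0 ≤ T)
    (f : EuclideanSpace ℝ (Fin n) → EuclideanSpace ℝ (Fin n))
    (hf : ContDiff ℝ 1 f)
    (φ : ℝ → EuclideanSpace ℝ (Fin n) → ℝ → ℝ) (K : ℝ)
    (hφ : ∀ (t : ℝ) (y : EuclideanSpace ℝ (Fin n)) (r₁ r₂ : ℝ),
      |φ t y r₁ - φ t y r₂| ≤ K * |r₁ - r₂|)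
    (x : ℝ → EuclideanSpace ℝ (Fin n))
    (hx : ∀ t ∈ Icc (0 : ℝ) T, HasDerivAt x (f (x t)) t)
    (ρ₁ ρ₂ : ℝ × EuclideanSpace ℝ (Fin n) → ℝ)
    (hρ₁ : ContDiff ℝ 1 ρ₁) (hρ₂ : ContDiff ℝ 1 ρ₂)
    (hliouville₁ : ∀ t ∈ Icc (0 : ℝ) T, ∀ (y : EuclideanSpace ℝ (Fin n)),
      deriv (fun s => ρ₁ (s, y)) t + diverg (fun z => ρ₁ (t, z) • f z) y
        = φ t y (ρ₁ (t, y)))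
    (hliouville₂ : ∀ t ∈ Icc (0 : ℝ) T, ∀ (y : EuclideanSpace ℝ (Fin n)),
      deriv (fun s => ρ₂ (s, y)) t + diverg (fun z => ρ₂ (t, z) • f z) y
        = φ t y (ρ₂ (t, y)))
    (h0 : ρ₁ (0, x 0) = ρ₂ (0, x 0)) :
    ∀ t ∈ Icc (0 : ℝ) T, ρ₁ (t, x t) = ρ₂ (t, x t) := by
  have hd : ∀ t ∈ Icc (0 : ℝ) T, HasDerivAt (fun s => ρ₁ (s, x s) - ρ₂ (s, x s)) _ t :=
    fun t ht => (liouville_deriv_aux f hf x t _ (hx t ht) ρ₁ hρ₁ (hliouville₁ t ht (x t))).sub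
      (liouville_deriv_aux f hf x t _ (hx t ht) ρ₂ hρ₂ (hliouville₂ t ht (x t)))
  have hdc : Continuous (diverg f) := by
    have h1 : Continuous (fderiv ℝ f) := hf.continuous_fderiv one_ne_zero
    have h2 : Continuous ((LinearMap.trace ℝ (EuclideanSpace ℝ (Fin n))).comp
      (ContinuousLinearMap.coeLM ℝ :
        (EuclideanSpace ℝ (Fin n) →L[ℝ] EuclideanSpace ℝ (Fin n)) →ₗ[ℝ] _)) :=
      LinearMap.continuous_of_finiteDimensional _
    exact h2.comp h1
  have hxc : ContinuousOn x (Icc 0 T) := fun t ht => (hx t ht).continuousAt.continuousWithinAt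
  obtain ⟨M, hM⟩ := isCompact_Icc.exists_bound_of_continuousOn (hdc.comp_continuousOn hxc)
  have key := eq_zero_of_abs_deriv_le_mul_abs_self_of_eq_zero_right (K := K + M)
    (fun t ht => (hd t ht).continuousAt.continuousWithinAt)
    (fun t ht => (hd t (Ico_subset_Icc_self ht)).hasDerivWithinAt)
    (sub_eq_zero.2 h0) (by
      intro t ht
      have hm := hM t (Ico_subset_Icc_self ht)
      have hp := hφ t (x t) (ρ₁ (t, x t)) (ρ₂ (t, x t))
      simp only [Real.norm_eq_abs, Function.comp] at hm ⊢
      have e : φ t (x t) (ρ₁ (t, x t)) - ρ₁ (t, x t) * diverg f (x t)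
          - (φ t (x t) (ρ₂ (t, x t)) - ρ₂ (t, x t) * diverg f (x t))
          = (φ t (x t) (ρ₁ (t, x t)) - φ t (x t) (ρ₂ (t, x t)))
            - diverg f (x t) * (ρ₁ (t, x t) - ρ₂ (t, x t)) := by ring
      rw [e]
      refine (abs_sub _ _).trans ?_
      rw [abs_mul, add_mul]
      exact add_le_add hp (mul_le_mul_of_nonneg_right hm (abs_nonneg _)))
  exact fun t ht => sub_eq_zero.1 (key t ht)
end
end

section
/- Let w : ℝⁿ → ℝⁿ be continuously differentiable, with w integrable on ℝⁿ and with the map x ↦ ‖Dw(x)‖ (operator norm of the total derivative) integrable on ℝⁿ. Then ∫_{ℝⁿ} (div w)(x) dx = 0, where div w denotes the divergence of w (the trace of its derivative). -/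
noncomputable section

open MeasureTheory

/-- Decay-at-infinity version of Lemma 1's conclusion: for a `C¹` vector field
that is integrable together with its derivative, the integral of the divergence
over all of `ℝⁿ` vanishes. -/
theorem integral_div_eq_zero {n : ℕ}
    (w : EuclideanSpace ℝ (Fin n) → EuclideanSpace ℝ (Fin n))
    (hw : ContDiff ℝ 1 w)
    (hw_int : Integrable w)
    (hDw_int : Integrable (fun x => ‖fderiv ℝ w x‖)) :
    ∫ x, diverg w x = 0 := by
  have hD : Integrable (fun x => fderiv ℝ w x) :=
    (integrable_norm_iff (hw.continuous_fderiv one_ne_zero).aestronglyMeasurable).1 hDw_int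
  have hDv : ∀ v, Integrable (fun x => fderiv ℝ w x v) := fun v => hD.apply_continuousLinearMap v
  have key : ∀ v, ∫ x, fderiv ℝ w x v = 0 := by
    intro v
    have h := integral_smul_fderiv_eq_neg_fderiv_smul_of_integrable (μ := volume) (𝕜 := ℝ)
      (f := fun _ => (1 : ℝ)) (g := w) (v := v) (by simp) (by simpa using hDv v)
      (by simpa using hw_int) (fun x _ => differentiableAt_const _)
      (fun x _ => (hw.differentiable one_ne_zero) x)
    simpa using h
  let b := EuclideanSpace.basisFun (Fin n) ℝ
  have ht : ∀ x, diverg w x = ∑ i, inner ℝ (b i) (fderiv ℝ w x (b i)) := by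
    intro x
    exact LinearMap.trace_eq_sum_inner _ b
  simp_rw [ht]
  rw [integral_finsetSum _ (fun i _ => (hDv (b i)).const_inner (b i))]
  refine Finset.sum_eq_zero fun i _ => ?_
  rw [integral_inner (hDv (b i)), key, inner_zero_right]
end
end

section
/- Let κ > 0, let ρ_s : ℝⁿ → ℝ be continuously differentiable, nonnegative, and integrable, let f : ℝⁿ → ℝⁿ be continuously differentiable, and let φ₊ : ℝⁿ → ℝ be integrable. Suppose the vector field w(x) = ρ_s(x)·f(x) is integrable with x ↦ ‖Dw(x)‖ integrable, and that the stationary Liouville equation div(ρ_s·f)(x) = φ₊(x) − κ·ρ_s(x) holds for all x ∈ ℝⁿ. Then κ·∫_{ℝⁿ} ρ_s(x) dx = ∫_{ℝⁿ} φ₊(x) dx. -/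
noncomputable section

open MeasureTheory

/-- Total mass balance for a stationary density: if
`∇·(ρ_s f) = φ₊ − κ ρ_s` on all of `ℝⁿ`, then `κ ∫ ρ_s = ∫ φ₊`. -/
theorem stationary_mass_balance {n : ℕ} (κ : ℝ) (hκ : 0 < κ)
    (ρs : EuclideanSpace ℝ (Fin n) → ℝ)
    (hρs : ContDiff ℝ 1 ρs) (hρs_nonneg : ∀ x, 0 ≤ ρs x)
    (hρs_int : Integrable ρs)
    (f : EuclideanSpace ℝ (Fin n) → EuclideanSpace ℝ (Fin n))
    (hf : ContDiff ℝ 1 f)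
    (φp : EuclideanSpace ℝ (Fin n) → ℝ) (hφp_int : Integrable φp)
    (hw_int : Integrable (fun x => ρs x • f x))
    (hDw_int : Integrable (fun x => ‖fderiv ℝ (fun y => ρs y • f y) x‖))
    (hliouville : ∀ x, diverg (fun y => ρs y • f y) x = φp x - κ * ρs x) :
    κ * ∫ x, ρs x = ∫ x, φp x := by
  set w : EuclideanSpace ℝ (Fin n) → EuclideanSpace ℝ (Fin n) := fun y => ρs y • f y with hw
  have hwC : ContDiff ℝ 1 w := hρs.smul hf
  have hwd : Differentiable ℝ w := hwC.differentiable (by norm_num)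
  have hcont : Continuous (fderiv ℝ w) := hwC.continuous_fderiv (by norm_num)
  have hDw : Integrable (fderiv ℝ w) :=
    (integrable_norm_iff hcont.aestronglyMeasurable).1 hDw_int
  have hv : ∀ v, Integrable (fun x => fderiv ℝ w x v) := fun v => hDw.apply_continuousLinearMap v
  have hzero : ∀ v, ∫ x, fderiv ℝ w x v = 0 := by
    intro v
    have := integral_smul_fderiv_eq_neg_fderiv_smul_of_integrable (𝕜 := ℝ)
      (μ := (volume : Measure (EuclideanSpace ℝ (Fin n)))) (f := fun _ => (1:ℝ)) (g := w) (v := v)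
      (by simp) (by simpa using hv v) (by simpa using hw_int) (fun x _ => by fun_prop) (fun x _ => hwd x)
    simpa using this
  have hdiv : ∫ x, diverg w x = 0 := by
    have h1 : ∀ x, diverg w x = ∑ i, inner ℝ (EuclideanSpace.basisFun (Fin n) ℝ i)
        (fderiv ℝ w x (EuclideanSpace.basisFun (Fin n) ℝ i)) := by
      intro x
      exact LinearMap.trace_eq_sum_inner _ (EuclideanSpace.basisFun (Fin n) ℝ)
    simp_rw [h1]
    rw [integral_finsetSum _ (fun i _ => (hv _).const_inner _)]
    refine Finset.sum_eq_zero fun i _ => ?_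
    rw [integral_inner (hv _), hzero, inner_zero_right]
  simp_rw [hliouville] at hdiv
  rw [integral_sub hφp_int (hρs_int.const_mul κ), integral_const_mul] at hdiv
  linarith
end
end

section
/- Consider a_max > 0, v_max > 0, D_min ∈ ℝ, initial gap D₀, ego initial velocity v₀ with 0 ≤ v₀ ≤ v_max and lead initial velocity v_{l0} with 0 ≤ v_{l0} ≤ v_max, and suppose the control barrier function is negative initially: D₀ − D_min − (v₀² − v_{l0}²)/(2·a_max) < 0. Let the lead vehicle apply maximal braking, i.e., its velocity is v_l(t) = max(v_{l0} − a_max·t, 0). Then for every differentiable ego velocity v : [0, ∞) → ℝ with v(0) = v₀, 0 ≤ v(t) ≤ v_max and |v′(t)| ≤ a_max for all t ≥ 0, there exists a time t ≥ 0 (in fact t = v₀/a_max suffices) at which the gap D(t) = D₀ + ∫₀^t (v_l(s) − v(s)) ds satisfies D(t) < D_min. -/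
open Set intervalIntegral

theorem acc_aux_lin (a c T : ℝ) : ∫ s in (0:ℝ)..T, (c - a * s) = c * T - a * T ^ 2 / 2 := by
  rw [intervalIntegral.integral_sub (by simp) (Continuous.intervalIntegrable (by fun_prop) _ _)]
  rw [intervalIntegral.integral_const_mul, integral_id, intervalIntegral.integral_const, smul_eq_mul]
  ring

theorem acc_aux_lead (a c T : ℝ) (ha : 0 < a) (hc : 0 ≤ c) (hT : 0 ≤ T) :
    ∫ s in (0:ℝ)..T, max (c - a * s) 0 ≤ c ^ 2 / (2 * a) := by
  have key : ∀ R, 0 ≤ R → a * R ≤ c →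
      ∫ s in (0:ℝ)..R, max (c - a * s) 0 = c * R - a * R ^ 2 / 2 := by
    intro R hR hRc
    rw [← acc_aux_lin]
    apply intervalIntegral.integral_congr
    intro s hs
    rw [uIcc_of_le hR] at hs
    have : a * s ≤ a * R := mul_le_mul_of_nonneg_left hs.2 ha.le
    exact max_eq_left (by linarith)
  rcases le_total (a * T) c with h | h
  · rw [key T hT h, le_div_iff₀ (by positivity)]
    nlinarith [sq_nonneg (c - a * T)]
  · have hS : a * (c / a) = c := by field_simp
    have hST : c / a ≤ T := by rw [div_le_iff₀ ha]; linarith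
    have hi : ∀ x y : ℝ, IntervalIntegrable (fun s => max (c - a * s) 0) MeasureTheory.volume x y :=
      fun x y => Continuous.intervalIntegrable (by fun_prop) _ _
    rw [← intervalIntegral.integral_add_adjacent_intervals (hi 0 (c / a)) (hi (c / a) T),
      key (c / a) (by positivity) hS.le]
    have h0 : ∫ s in (c / a)..T, max (c - a * s) 0 = ∫ s in (c / a)..T, (0:ℝ) := by
      apply intervalIntegral.integral_congr
      intro s hs
      rw [uIcc_of_le hST] at hs
      have : a * (c / a) ≤ a * s := mul_le_mul_of_nonneg_left hs.1 ha.le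
      exact max_eq_right (by linarith)
    rw [h0]
    simp only [intervalIntegral.integral_zero]
    apply le_of_eq
    field_simp
    ring

/-- ACC unsafety when the control barrier function is negative: if
`b = D − D_min − (v² − v_l²)/(2 a_max) < 0` initially, then maximal braking of
the lead vehicle forces a violation of the safety constraint `D ≥ D_min` for
every admissible ego-vehicle behavior. -/
theorem acc_cbf_neg_implies_unsafe
    (amax vmax Dmin D₀ v₀ vl₀ : ℝ) (hamax : 0 < amax) (hvmax : 0 < vmax)
    (hv₀ : 0 ≤ v₀) (hv₀max : v₀ ≤ vmax)
    (hvl₀ : 0 ≤ vl₀) (hvl₀max : vl₀ ≤ vmax)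
    (hb0 : D₀ - Dmin - (v₀ ^ 2 - vl₀ ^ 2) / (2 * amax) < 0)
    (vl : ℝ → ℝ) (hvl : ∀ t, vl t = max (vl₀ - amax * t) 0)
    (v v' : ℝ → ℝ)
    (hv0 : v 0 = v₀)
    (hv_deriv : ∀ t ∈ Ici (0 : ℝ), HasDerivWithinAt v (v' t) (Ici (0 : ℝ)) t)
    (hv_bounds : ∀ t ∈ Ici (0 : ℝ), 0 ≤ v t ∧ v t ≤ vmax)
    (hv_accel : ∀ t ∈ Ici (0 : ℝ), |v' t| ≤ amax)
    (D : ℝ → ℝ) (hD : ∀ t, D t = D₀ + ∫ s in (0 : ℝ)..t, (vl s - v s)) :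
    ∃ t ∈ Ici (0 : ℝ), D t < Dmin := by
  have hlow : ∀ t, 0 ≤ t → v₀ - amax * t ≤ v t := by
    intro t ht
    have h := (convex_Ici (0:ℝ)).norm_image_sub_le_of_norm_hasDerivWithin_le hv_deriv
      (fun x hx => by simpa using hv_accel x hx) (show (0:ℝ) ∈ Ici 0 by simp) (show t ∈ Ici 0 from ht)
    rw [hv0, Real.norm_eq_abs, Real.norm_eq_abs, sub_zero, abs_of_nonneg ht] at h
    linarith [(abs_le.mp h).1]
  have hT : 0 ≤ v₀ / amax := by positivity
  refine ⟨v₀ / amax, hT, ?_⟩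
  have hvc : ContinuousOn v (Ici 0) := fun t ht => (hv_deriv t ht).continuousWithinAt
  have hvi : IntervalIntegrable v MeasureTheory.volume 0 (v₀ / amax) := by
    apply ContinuousOn.intervalIntegrable
    rw [uIcc_of_le hT]
    exact hvc.mono Icc_subset_Ici_self
  have hvle : vl = fun s => max (vl₀ - amax * s) 0 := funext hvl
  have hli : IntervalIntegrable vl MeasureTheory.volume 0 (v₀ / amax) := by
    rw [hvle]
    exact Continuous.intervalIntegrable (by fun_prop) _ _
  rw [hD, intervalIntegral.integral_sub hli hvi]
  have h1 : ∫ s in (0:ℝ)..(v₀ / amax), vl s ≤ vl₀ ^ 2 / (2 * amax) := by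
    rw [hvle]
    exact acc_aux_lead amax vl₀ _ hamax hvl₀ hT
  have h2 : ∫ s in (0:ℝ)..(v₀ / amax), (v₀ - amax * s) ≤ ∫ s in (0:ℝ)..(v₀ / amax), v s :=
    intervalIntegral.integral_mono_on hT (Continuous.intervalIntegrable (by fun_prop) _ _) hvi
      (fun s hs => hlow s hs.1)
  rw [acc_aux_lin] at h2
  have h3 : v₀ * (v₀ / amax) - amax * (v₀ / amax) ^ 2 / 2 = v₀ ^ 2 / (2 * amax) := by
    field_simp
    ring
  rw [sub_div] at hb0
  linarith
end
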